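/- arXiv:2605.24484 — 5 statements merged into one kernel-verified Lean document; each statement's English description precedes it below -/
import Mathlib

section
/- Let d : V × V → ℝ be a quasimetric on a set V, let M ≥ 1, let p_1, …, p_M ∈ V be pivots, and let Φ be the normalized Bidirectional Fréchet Representation. Define the pivot separation score s(v_i, v_j) = max over m = 1, …, M of max( |d(v_i, p_m) − d(v_j, p_m)|, |d(p_m, v_i) − d(p_m, v_j)| ). Then for all v_i, v_j ∈ V, s(v_i, v_j)/√(2M) ≤ ‖Φ(v_i) − Φ(v_j)‖_2 ≤ D_sym(v_i, v_j). -/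
/-!
By the triangle inequality applied in both directions, every function `d · p` and `d p ·` changes
by at most `D = max (d vi vj) (d vj vi)` between `vi` and `vj`, so each of the `2M` coordinates of
`Φ vi - Φ vj` is at most `D / √(2M)` in absolute value, and the squares sum to at most `D²`.
The lower bound holds because the Euclidean norm dominates each coordinate.
-/

/-- Sandwich bound for the normalized Bidirectional Fréchet Representation:
`s(v_i,v_j)/√(2M) ≤ ‖Φ(v_i) − Φ(v_j)‖₂ ≤ D_sym(v_i,v_j)`, where `s` is the
pivot separation score. -/
theorem bfr_sandwich_bound
    {V : Type*} (d : V → V → ℝ)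
    (hnonneg : ∀ x y : V, 0 ≤ d x y)
    (hself : ∀ x : V, d x x = 0)
    (htri : ∀ x y z : V, d x z ≤ d x y + d y z)
    (M : ℕ) (hM : 1 ≤ M) (p : Fin M → V)
    (Φ : V → EuclideanSpace ℝ (Fin M × Fin 2))
    (hΦout : ∀ (v : V) (m : Fin M), Φ v (m, 0) = d v (p m) / Real.sqrt (2 * M))
    (hΦin : ∀ (v : V) (m : Fin M), Φ v (m, 1) = d (p m) v / Real.sqrt (2 * M))
    (s : V → V → ℝ)
    (hs : ∀ vi vj : V, s vi vj =
      Finset.univ.sup' ⟨⟨0, hM⟩, Finset.mem_univ _⟩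
        (fun m : Fin M =>
          max |d vi (p m) - d vj (p m)| |d (p m) vi - d (p m) vj|))
    (vi vj : V) :
    s vi vj / Real.sqrt (2 * M) ≤ ‖Φ vi - Φ vj‖ ∧
      ‖Φ vi - Φ vj‖ ≤ max (d vi vj) (d vj vi) := by
  have hM0 : (0 : ℝ) < 2 * M := by
    have : (1 : ℝ) ≤ M := by exact_mod_cast hM
    linarith
  have hr : 0 < Real.sqrt (2 * M) := Real.sqrt_pos.mpr hM0
  have h0 (m : Fin M) : ‖(Φ vi - Φ vj) (m, 0)‖ =
      |d vi (p m) - d vj (p m)| / Real.sqrt (2 * M) := by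
    rw [PiLp.sub_apply, hΦout, hΦout, ← sub_div, Real.norm_eq_abs, abs_div, abs_of_pos hr]
  have h1 (m : Fin M) : ‖(Φ vi - Φ vj) (m, 1)‖ =
      |d (p m) vi - d (p m) vj| / Real.sqrt (2 * M) := by
    rw [PiLp.sub_apply, hΦin, hΦin, ← sub_div, Real.norm_eq_abs, abs_div, abs_of_pos hr]
  constructor
  · rw [div_le_iff₀ hr, hs]
    refine Finset.sup'_le _ _ fun m _ => max_le ?_ ?_
    · rw [← div_le_iff₀ hr, ← h0]
      exact PiLp.norm_apply_le _ _
    · rw [← div_le_iff₀ hr, ← h1]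
      exact PiLp.norm_apply_le _ _
  · set D := max (d vi vj) (d vj vi) with hD
    have hDi : d vi vj ≤ D := le_max_left _ _
    have hDj : d vj vi ≤ D := le_max_right _ _
    have hD0 : 0 ≤ D := (hnonneg vi vj).trans hDi
    have hcoord : ∀ k : Fin M × Fin 2, ‖(Φ vi - Φ vj) k‖ ≤ D / Real.sqrt (2 * M) := by
      rintro ⟨m, b⟩
      fin_cases b
      · refine (h0 m).trans_le (div_le_div_of_nonneg_right (abs_le.mpr ⟨?_, ?_⟩) hr.le)
        · linarith [htri vj vi (p m)]
        · linarith [htri vi vj (p m)]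
      · refine (h1 m).trans_le (div_le_div_of_nonneg_right (abs_le.mpr ⟨?_, ?_⟩) hr.le)
        · linarith [htri (p m) vi vj]
        · linarith [htri (p m) vj vi]
    rw [EuclideanSpace.norm_eq]
    refine Real.sqrt_le_iff.mpr ⟨hD0, ?_⟩
    calc ∑ k, ‖(Φ vi - Φ vj) k‖ ^ 2
        ≤ ∑ _k : Fin M × Fin 2, (D / Real.sqrt (2 * M)) ^ 2 :=
          Finset.sum_le_sum fun k _ => pow_le_pow_left₀ (norm_nonneg _) (hcoord k) 2
      _ = D ^ 2 := by
          rw [div_pow, Real.sq_sqrt hM0.le]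
          simp only [Finset.sum_const, Finset.card_univ, Fintype.card_prod, Fintype.card_fin,
            nsmul_eq_mul]
          push_cast
          field_simp
end

section
/- Let d : V × V → ℝ be a quasimetric on a set V, let M ≥ 1, let p_1, …, p_M ∈ V be pivots, let Φ be the normalized Bidirectional Fréchet Representation, and let s be the pivot separation score. Suppose the pivot set is η-separating for some η > 0, i.e. s(v_i, v_j) ≥ η·D_sym(v_i, v_j) for all v_i ≠ v_j. Then Φ is bi-Lipschitz with respect to D_sym with lower constant α = η/√(2M) and upper constant β = 1: for all v_i, v_j ∈ V, (η/√(2M))·D_sym(v_i, v_j) ≤ ‖Φ(v_i) − Φ(v_j)‖_2 ≤ D_sym(v_i, v_j); in particular its distortion β/α is at most √(2M)/η. -/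
/-! Every coordinate of `Φ vi - Φ vj` is a difference `d vi p - d vj p` or `d p vi - d p vj`
divided by `√(2M)`. By the triangle inequality it is at most `D / √(2M)` in absolute value, where
`D` is the symmetrized distance; summing the squares of the `2M` coordinates gives the upper bound.
For the lower bound, the Euclidean norm dominates each single coordinate, in particular the one at
which the separation score is attained, and that score is at least `η * D`. -/

/-- If the pivot set is `η`-separating, the normalized Bidirectional Fréchet
Representation is bi-Lipschitz with respect to `D_sym`, with lower constant
`η/√(2M)` and upper constant `1`; in particular its distortion is at most
`√(2M)/η`. -/
theorem bfr_biLipschitz_of_separating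
    {V : Type*} (d : V → V → ℝ)
    (hnonneg : ∀ x y : V, 0 ≤ d x y)
    (hself : ∀ x : V, d x x = 0)
    (htri : ∀ x y z : V, d x z ≤ d x y + d y z)
    (M : ℕ) (hM : 1 ≤ M) (p : Fin M → V)
    (Φ : V → EuclideanSpace ℝ (Fin M × Fin 2))
    (hΦout : ∀ (v : V) (m : Fin M), Φ v (m, 0) = d v (p m) / Real.sqrt (2 * M))
    (hΦin : ∀ (v : V) (m : Fin M), Φ v (m, 1) = d (p m) v / Real.sqrt (2 * M))
    (s : V → V → ℝ)
    (hs : ∀ vi vj : V, s vi vj =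
      Finset.univ.sup' ⟨⟨0, hM⟩, Finset.mem_univ _⟩
        (fun m : Fin M =>
          max |d vi (p m) - d vj (p m)| |d (p m) vi - d (p m) vj|))
    (η : ℝ) (hη : 0 < η)
    (hsep : ∀ vi vj : V, vi ≠ vj →
      η * max (d vi vj) (d vj vi) ≤ s vi vj) :
    ∀ vi vj : V,
      (η / Real.sqrt (2 * M)) * max (d vi vj) (d vj vi) ≤ ‖Φ vi - Φ vj‖ ∧
        ‖Φ vi - Φ vj‖ ≤ max (d vi vj) (d vj vi) := by
  intro vi vj
  have hMpos : (0 : ℝ) < 2 * M := by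
    have : (1 : ℝ) ≤ M := by exact_mod_cast hM
    linarith
  have hr : 0 < Real.sqrt (2 * M) := Real.sqrt_pos.mpr hMpos
  have hsq : Real.sqrt (2 * M) ^ 2 = 2 * M := Real.sq_sqrt hMpos.le
  have h0 : ∀ m, ‖(Φ vi - Φ vj) (m, 0)‖ = |d vi (p m) - d vj (p m)| / Real.sqrt (2 * M) := by
    intro m
    rw [PiLp.sub_apply, hΦout, hΦout, ← sub_div, Real.norm_eq_abs, abs_div, abs_of_pos hr]
  have h1 : ∀ m, ‖(Φ vi - Φ vj) (m, 1)‖ = |d (p m) vi - d (p m) vj| / Real.sqrt (2 * M) := by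
    intro m
    rw [PiLp.sub_apply, hΦin, hΦin, ← sub_div, Real.norm_eq_abs, abs_div, abs_of_pos hr]
  constructor
  · rcases eq_or_ne vi vj with rfl | hne
    · simp [hself]
    · rw [div_mul_eq_mul_div]
      refine (div_le_div_of_nonneg_right (hsep vi vj hne) hr.le).trans ?_
      obtain ⟨m, -, hm⟩ := Finset.exists_mem_eq_sup' (s := Finset.univ)
        ⟨⟨0, hM⟩, Finset.mem_univ _⟩ (fun m : Fin M =>
          max |d vi (p m) - d vj (p m)| |d (p m) vi - d (p m) vj|)
      rw [hs, hm, ← max_div_div_right hr.le, ← h0, ← h1]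
      exact max_le (PiLp.norm_apply_le _ _) (PiLp.norm_apply_le _ _)
  · set D := max (d vi vj) (d vj vi) with hD
    have hij : d vi vj ≤ D := le_max_left _ _
    have hji : d vj vi ≤ D := le_max_right _ _
    have hD0 : 0 ≤ D := (hnonneg vi vj).trans hij
    have hcoord : ∀ k, ‖(Φ vi - Φ vj) k‖ ≤ D / Real.sqrt (2 * M) := by
      rintro ⟨m, i⟩
      fin_cases i
      · refine (h0 m).le.trans (div_le_div_of_nonneg_right (abs_le.mpr ⟨?_, ?_⟩) hr.le)
        · linarith [htri vj vi (p m)]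
        · linarith [htri vi vj (p m)]
      · refine (h1 m).le.trans (div_le_div_of_nonneg_right (abs_le.mpr ⟨?_, ?_⟩) hr.le)
        · linarith [htri (p m) vi vj]
        · linarith [htri (p m) vj vi]
    rw [EuclideanSpace.norm_eq]
    refine Real.sqrt_le_iff.mpr ⟨hD0, ?_⟩
    calc ∑ k, ‖(Φ vi - Φ vj) k‖ ^ 2
        ≤ ∑ _k : Fin M × Fin 2, (D / Real.sqrt (2 * M)) ^ 2 :=
          Finset.sum_le_sum fun k _ => pow_le_pow_left₀ (norm_nonneg _) (hcoord k) 2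
      _ = D ^ 2 := by
          rw [Finset.sum_const, Finset.card_univ, Fintype.card_prod, Fintype.card_fin,
            Fintype.card_fin, nsmul_eq_mul, div_pow, hsq]
          push_cast
          rw [mul_comm (M : ℝ) 2]
          exact mul_div_cancel₀ _ hMpos.ne'
end

section
/- Let d : V × V → ℝ be a quasimetric on a finite set V, let M ≥ 1, let P = {p_1, …, p_M} ⊆ V be a pivot set with covering radius ρ = max_{v ∈ V} min_{p ∈ P} D_sym(v, p) under the symmetrized metric, and let s be the pivot separation score. Then for any v_i, v_j ∈ V, s(v_i, v_j) ≥ max( D_sym(v_i, v_j) − 2ρ, 0 ). -/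
/-!
Let `q` be the pivot nearest to `vj`, so that `d vj q ≤ ρ` and `d q vj ≤ ρ`. The triangle
inequality through `q` gives `d vi vj ≤ d vi q + d q vj`, hence
`d vi q - d vj q ≥ d vi vj - 2 * ρ`; in the same way `d q vi - d q vj ≥ d vj vi - 2 * ρ`.
So the single pivot `q` already witnesses the separation.
-/

/-- Coverage-induced separation: if the pivot set has covering radius `ρ` under
the symmetrized metric, then the pivot separation score satisfies
`s(v_i,v_j) ≥ max(D_sym(v_i,v_j) − 2ρ, 0)`. -/
theorem coverage_induced_separation
    {V : Type*} [Fintype V] [Nonempty V] (d : V → V → ℝ)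
    (hnonneg : ∀ x y : V, 0 ≤ d x y)
    (hself : ∀ x : V, d x x = 0)
    (htri : ∀ x y z : V, d x z ≤ d x y + d y z)
    (M : ℕ) (hM : 1 ≤ M) (p : Fin M → V)
    (ρ : ℝ)
    (hρ : ρ = ⨆ v : V, ⨅ m : Fin M, max (d v (p m)) (d (p m) v))
    (s : V → V → ℝ)
    (hs : ∀ vi vj : V, s vi vj =
      Finset.univ.sup' ⟨⟨0, hM⟩, Finset.mem_univ _⟩
        (fun m : Fin M =>
          max |d vi (p m) - d vj (p m)| |d (p m) vi - d (p m) vj|))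
    (vi vj : V) :
    max (max (d vi vj) (d vj vi) - 2 * ρ) 0 ≤ s vi vj := by
  have : Nonempty (Fin M) := ⟨⟨0, hM⟩⟩
  obtain ⟨m, hm⟩ := exists_eq_ciInf_of_finite (f := fun m : Fin M => max (d vj (p m)) (d (p m) vj))
  have hcov : max (d vj (p m)) (d (p m) vj) ≤ ρ := by
    rw [hρ]
    exact hm.le.trans (le_ciSup (f := fun v : V => ⨅ m : Fin M, max (d v (p m)) (d (p m) v))
      (Set.finite_range _).bddAbove vj)
  obtain ⟨hto, hfrom⟩ := max_le_iff.mp hcov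
  have hsep : max |d vi (p m) - d vj (p m)| |d (p m) vi - d (p m) vj| ≤ s vi vj := by
    rw [hs]
    exact Finset.le_sup' (fun m : Fin M =>
      max |d vi (p m) - d vj (p m)| |d (p m) vi - d (p m) vj|) (Finset.mem_univ m)
  obtain ⟨hsep₁, hsep₂⟩ := max_le_iff.mp hsep
  have hij := htri vi (p m) vj
  have hji := htri vj (p m) vi
  have habs₁ := le_abs_self (d vi (p m) - d vj (p m))
  have habs₂ := le_abs_self (d (p m) vi - d (p m) vj)
  refine max_le ?_ ((abs_nonneg _).trans hsep₁)
  rw [sub_le_iff_le_add]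
  exact max_le (by linarith) (by linarith)
end

section
/- Let d : V × V → ℝ be a quasimetric on a finite set V, let M ≥ 1, let P = {p_1, …, p_M} ⊆ V be a pivot set with covering radius ρ = max_{v ∈ V} min_{p ∈ P} D_sym(v, p) under the symmetrized metric, and let Φ be the normalized Bidirectional Fréchet Representation built from P. Then for any v_i, v_j ∈ V, ‖Φ(v_i) − Φ(v_j)‖_2 ≥ max( D_sym(v_i, v_j) − 2ρ, 0 ) / √(2M). -/
/-!
Take a pivot `p` within symmetrized distance `ρ` of `vi`; one exists because both the pivot set
and `V` are finite, so the infimum is attained and the supremum is an upper bound. The triangle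
inequality gives `d p vj - d p vi ≥ d vi vj - 2ρ` and `d vj p - d vi p ≥ d vj vi - 2ρ`.
The left sides are, up to the normalization, the differences of the two coordinates of `Φ` at
`p`, and a single coordinate never exceeds the Euclidean norm.
-/

/-- Coverage-induced lower bound on BFR embedding distances: if the pivot set
has covering radius `ρ` under the symmetrized metric, then
`‖Φ(v_i) − Φ(v_j)‖₂ ≥ max(D_sym(v_i,v_j) − 2ρ, 0)/√(2M)`. -/
theorem bfr_coverage_lower_bound
    {V : Type*} [Fintype V] [Nonempty V] (d : V → V → ℝ)
    (hnonneg : ∀ x y : V, 0 ≤ d x y)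
    (hself : ∀ x : V, d x x = 0)
    (htri : ∀ x y z : V, d x z ≤ d x y + d y z)
    (M : ℕ) (hM : 1 ≤ M) (p : Fin M → V)
    (ρ : ℝ)
    (hρ : ρ = ⨆ v : V, ⨅ m : Fin M, max (d v (p m)) (d (p m) v))
    (Φ : V → EuclideanSpace ℝ (Fin M × Fin 2))
    (hΦout : ∀ (v : V) (m : Fin M), Φ v (m, 0) = d v (p m) / Real.sqrt (2 * M))
    (hΦin : ∀ (v : V) (m : Fin M), Φ v (m, 1) = d (p m) v / Real.sqrt (2 * M))
    (vi vj : V) :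
    max (max (d vi vj) (d vj vi) - 2 * ρ) 0 / Real.sqrt (2 * M)
      ≤ ‖Φ vi - Φ vj‖ := by
  -- A pivot attaining the infimum at `vi`; its symmetrized distance to `vi` is at most `ρ`.
  haveI : Nonempty (Fin M) := ⟨⟨0, hM⟩⟩
  obtain ⟨m, hm⟩ := exists_eq_ciInf_of_finite
    (f := fun m : Fin M => max (d vi (p m)) (d (p m) vi))
  have hle : max (d vi (p m)) (d (p m) vi) ≤ ρ := by
    rw [hρ]
    exact hm.le.trans (le_ciSup
      (f := fun v : V => ⨅ m : Fin M, max (d v (p m)) (d (p m) v))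
      (Set.finite_range _).bddAbove vi)
  have hout : d vi (p m) ≤ ρ := (le_max_left _ _).trans hle
  have hin : d (p m) vi ≤ ρ := (le_max_right _ _).trans hle
  have hcoord : ∀ i, |Φ vi i - Φ vj i| ≤ ‖Φ vi - Φ vj‖ := fun i => by
    simpa using PiLp.norm_apply_le (Φ vi - Φ vj) i
  have hs : 0 < Real.sqrt (2 * M) := by
    have : (0 : ℝ) < M := by exact_mod_cast hM
    positivity
  have h0 := hcoord (m, 0)
  have h1 := hcoord (m, 1)
  rw [hΦout, hΦout, ← sub_div, abs_div, abs_of_pos hs, div_le_iff₀ hs] at h0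
  rw [hΦin, hΦin, ← sub_div, abs_div, abs_of_pos hs, div_le_iff₀ hs] at h1
  rw [div_le_iff₀ hs]
  refine max_le ?_ (by positivity)
  rw [sub_le_iff_le_add]
  refine max_le ?_ ?_
  · linarith [htri vi (p m) vj, neg_le_abs (d (p m) vi - d (p m) vj)]
  · linarith [htri vj (p m) vi, neg_le_abs (d vi (p m) - d vj (p m))]
end

section
/- Let (V, ρ) be a finite metric space, let P_init ⊆ V be a fixed nonempty seed set, and let P_M = P_init ∪ {q_1, …, q_k} be obtained by furthest-first traversal: for each a = 1, …, k, the point q_a maximizes, over v ∈ V, the minimum distance min_{p ∈ P_init ∪ {q_1, …, q_{a−1}}} ρ(v, p). Define the covering radius R(P) = max_{v ∈ V} min_{p ∈ P} ρ(v, p). Then for any set P* ⊆ V with P_init ⊆ P* and |P*| = |P_M| that minimizes the covering radius among such sets, R(P_M) ≤ 2·R(P*). -/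
/-!
Let `r` be the covering radius of the greedy set `P k`, attained at a point `z`. Every greedy
choice `q a` was at least as far from `P a` as `z`, hence at distance at least `r` from `P a`.
So in `insert z (P k)` any two distinct points that are not both seeds are at distance at least
`r` (`separated_insert`). If `r > 2 * R Pstar`, then `z ∉ P k`, and this set has one more
element than `Pstar`. Send each seed to itself and every other point to a nearest point of `Pstar`.
By pigeonhole two distinct points have the same image; they are not both seeds, and the triangle
inequality puts them within `2 * R Pstar < r` of each other, a contradiction.
-/

/-- Distinct points of `S`, not both in the seed set `I`, are at distance at least `r`. -/
def FFTSeparated {V : Type*} [MetricSpace V] (r : ℝ) (I S : Finset V) : Prop :=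
  ∀ x ∈ S, ∀ y ∈ S, x ≠ y → (x ∈ I ∧ y ∈ I) ∨ r ≤ dist x y

lemma separated_insert {V : Type*} [DecidableEq V] [MetricSpace V] {r : ℝ} {I S : Finset V}
    (h : FFTSeparated r I S) {z : V} (hz : ∀ p ∈ S, r ≤ dist z p) :
    FFTSeparated r I (insert z S) := by
  intro x hx y hy hxy
  rcases Finset.mem_insert.1 hx with rfl | hxS <;> rcases Finset.mem_insert.1 hy with rfl | hyS
  · exact absurd rfl hxy
  · exact Or.inr (hz y hyS)
  · exact Or.inr (dist_comm x y ▸ hz x hxS)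
  · exact h x hxS y hyS hxy

lemma sInf_dist_le {V : Type*} [MetricSpace V] (Q : Finset V) (v : V) {p : V} (hp : p ∈ Q) :
    sInf ((fun p => dist v p) '' (Q : Set V)) ≤ dist v p :=
  csInf_le (Q.finite_toSet.image _).bddBelow ⟨p, hp, rfl⟩

lemma exists_dist_eq_sInf {V : Type*} [MetricSpace V] (Q : Finset V) (hQ : Q.Nonempty) (v : V) :
    ∃ p ∈ Q, dist v p = sInf ((fun p => dist v p) '' (Q : Set V)) :=
  (hQ.to_set.image fun p => dist v p).csInf_mem (Q.finite_toSet.image _)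

/-- Furthest-first traversal starting from a seed set `P_init` achieves a
2-approximation of the optimal covering radius among sets containing `P_init`
of the same cardinality. -/
theorem furthest_first_traversal_two_approx
    {V : Type*} [Fintype V] [DecidableEq V] [Nonempty V] [MetricSpace V]
    (Pinit : Finset V) (hPinit : Pinit.Nonempty)
    (k : ℕ) (q : ℕ → V) (P : ℕ → Finset V)
    (hP0 : P 0 = Pinit)
    (hPsucc : ∀ a : ℕ, P (a + 1) = insert (q a) (P a))
    (hgreedy : ∀ a < k, ∀ v : V,
      sInf ((fun p => dist v p) '' (P a : Set V)) ≤
        sInf ((fun p => dist (q a) p) '' (P a : Set V)))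
    (R : Finset V → ℝ)
    (hR : ∀ Q : Finset V,
      R Q = ⨆ v : V, sInf ((fun p => dist v p) '' (Q : Set V)))
    (Pstar : Finset V) (hsub : Pinit ⊆ Pstar) (hcard : Pstar.card = (P k).card)
    (hmin : ∀ Q : Finset V, Pinit ⊆ Q → Q.card = (P k).card → R Pstar ≤ R Q) :
    R (P k) ≤ 2 * R Pstar := by
  have hmono : Monotone P := monotone_nat_of_le_succ fun a => by
    rw [hPsucc]; exact Finset.subset_insert _ _
  have hcover : ∀ v, ∃ p ∈ Pstar, dist v p ≤ R Pstar := fun v => by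
    obtain ⟨p, hp, h⟩ := exists_dist_eq_sInf Pstar (hPinit.mono hsub) v
    refine ⟨p, hp, ?_⟩
    rw [h, hR]
    exact le_ciSup (f := fun v : V => sInf ((fun p => dist v p) '' (Pstar : Set V)))
      (Set.finite_range _).bddAbove v
  have hnonneg : 0 ≤ R Pstar := by
    obtain ⟨p, -, h⟩ := hcover (Classical.arbitrary V)
    exact dist_nonneg.trans h
  obtain ⟨z, hz⟩ := exists_eq_ciSup_of_finite
    (f := fun v : V => sInf ((fun p => dist v p) '' (P k : Set V)))
  rw [← hR] at hz
  have hzfar : ∀ p ∈ P k, R (P k) ≤ dist z p := fun p hp => hz ▸ sInf_dist_le (P k) z hp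
  by_contra! hlt
  have hsep : ∀ a ≤ k, FFTSeparated (R (P k)) Pinit (P a) := by
    intro a
    induction a with
    | zero =>
      intro _ x hx y hy _
      rw [hP0] at hx hy
      exact Or.inl ⟨hx, hy⟩
    | succ a ih =>
      intro ha
      rw [hPsucc]
      refine separated_insert (ih (by omega)) fun p hp => ?_
      -- `q a` is at least as far from `P a` as `z` is, and `P a ⊆ P k`.
      obtain ⟨p', hp', h⟩ := exists_dist_eq_sInf (P a) ⟨p, hp⟩ z
      calc R (P k) ≤ dist z p' := hzfar p' (hmono (by omega : a ≤ k) hp')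
        _ ≤ _ := h.le.trans (hgreedy a (by omega) z)
        _ ≤ dist (q a) p := sInf_dist_le (P a) (q a) hp
  have hT := separated_insert (hsep k le_rfl) hzfar
  have hzmem : z ∉ P k := fun hmem => by
    have := hzfar z hmem
    rw [dist_self] at this
    linarith
  have hf : ∀ x, ∃ p ∈ Pstar, dist x p ≤ R Pstar ∧ (x ∈ Pinit → p = x) := fun x => by
    by_cases hx : x ∈ Pinit
    · exact ⟨x, hsub hx, by rwa [dist_self], fun _ => rfl⟩
    · obtain ⟨p, hp, h⟩ := hcover x
      exact ⟨p, hp, h, fun h' => absurd h' hx⟩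
  choose f hfmem hfdist hfseed using hf
  obtain ⟨x, hx, y, hy, hxy, hfxy⟩ := Finset.exists_ne_map_eq_of_card_lt_of_maps_to
    (s := insert z (P k)) (t := Pstar) (f := f)
    (by rw [Finset.card_insert_of_notMem hzmem]; omega) (fun x _ => hfmem x)
  rcases hT x hx y hy hxy with ⟨hxI, hyI⟩ | hr
  · exact hxy (by rw [← hfseed x hxI, hfxy, hfseed y hyI])
  · have h1 := hfdist x
    have h2 := hfdist y
    rw [hfxy] at h1
    linarith [dist_triangle_right x y (f y)]
end
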